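/- Fix ρ ∈ (0,1) and α ∈ (0,1). Let (α_n) be a sequence in (0,1) with n·α_n → α, and let c_n be defined by Φ(−c_n) = α_n. Then n·∫_ℝ Φ(d(ρ,c_n,z))^{n−1}·φ(d(ρ,c_n,z))·|G(ρ,c_n,z)|·φ(z) dz → 0 as n → ∞, where G(ρ,c,z) = (c + z/√ρ)/(2(1−ρ)^{3/2}). -/

import Mathlib

open MeasureTheory Filter

/-- The standard normal density. -/
noncomputable def phi (x : ℝ) : ℝ := (Real.sqrt (2 * Real.pi))⁻¹ * Real.exp (-x ^ 2 / 2)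

/-- The standard normal cumulative distribution function. -/
noncomputable def Phi (x : ℝ) : ℝ := ∫ t in Set.Iic x, phi t

/-- d(ρ,c,z) = (c + √ρ·z)/√(1−ρ). -/
noncomputable def dd (ρ c z : ℝ) : ℝ := (c + Real.sqrt ρ * z) / Real.sqrt (1 - ρ)

/-- G(ρ,c,z) = (c + z/√ρ)/(2(1−ρ)^{3/2}). -/
noncomputable def G (ρ c z : ℝ) : ℝ :=
  (c + z / Real.sqrt ρ) / (2 * (1 - ρ) ^ ((3 : ℝ) / 2))

/-- H_n(ρ,c) = ∫ Φ(d(ρ,c,z))^n φ(z) dz. -/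
noncomputable def Hn (n : ℕ) (ρ c : ℝ) : ℝ := ∫ z : ℝ, (Phi (dd ρ c z)) ^ n * phi z


lemma phi_pos (x : ℝ) : 0 < phi x := by
  unfold phi; positivity

lemma phi_int : Integrable phi := by
  have h := (integrable_exp_neg_mul_sq (b := 1/2) (by norm_num)).const_mul (Real.sqrt (2 * Real.pi))⁻¹
  refine h.congr (Eventually.of_forall fun x => ?_)
  simp only [phi]; congr 2; ring

lemma phi_integral : ∫ x, phi x = 1 := by
  have h : ∀ x, phi x = (Real.sqrt (2 * Real.pi))⁻¹ * Real.exp (-(1/2) * x^2) := by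
    intro x; simp only [phi]; congr 2; ring
  simp_rw [h]
  rw [integral_const_mul, integral_gaussian]
  have : Real.pi / (1/2) = 2 * Real.pi := by ring
  rw [this]
  exact inv_mul_cancel₀ (by positivity)

lemma phi_neg (x : ℝ) : phi (-x) = phi x := by simp [phi]

lemma Phi_mono {x y : ℝ} (h : x ≤ y) : Phi x ≤ Phi y :=
  setIntegral_mono_set phi_int.integrableOn
    (Eventually.of_forall fun t => (phi_pos t).le) (Set.Iic_subset_Iic.2 h).eventuallyLE

lemma Phi_nonneg (x : ℝ) : 0 ≤ Phi x :=
  integral_nonneg fun t => (phi_pos t).le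

lemma Phi_compl (x : ℝ) : Phi x = 1 - Phi (-x) := by
  have h1 : (∫ t in Set.Iic x, phi t) + ∫ t in Set.Ioi x, phi t = 1 := by
    rw [intervalIntegral.integral_Iic_add_Ioi phi_int.integrableOn phi_int.integrableOn, phi_integral]
  have h2 : Phi (-x) = ∫ t in Set.Ioi x, phi t := by
    have := integral_comp_neg_Iic (-x) phi
    simp only [phi_neg, neg_neg] at this
    exact this
  rw [h2]; unfold Phi; linarith

lemma Phi_lower {x : ℝ} (hx : 0 ≤ x) : phi (x+1) ≤ Phi (-x) := by
  have h1 : ∫ t in Set.Icc (-x-1) (-x), phi t ≤ Phi (-x) :=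
    setIntegral_mono_set phi_int.integrableOn
      (Eventually.of_forall fun t => (phi_pos t).le) Set.Icc_subset_Iic_self.eventuallyLE
  refine le_trans ?_ h1
  have h2 : ∫ t in Set.Icc (-x-1) (-x), phi (x+1) ≤ ∫ t in Set.Icc (-x-1) (-x), phi t := by
    refine setIntegral_mono_on (by simp) phi_int.integrableOn measurableSet_Icc ?_
    intro t ht
    unfold phi
    have h3 : t^2 ≤ (x+1)^2 := by nlinarith [ht.1, ht.2]
    refine mul_le_mul_of_nonneg_left (Real.exp_le_exp.2 ?_) (by positivity)
    linarith
  simpa using h2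

lemma Phi_pos {x : ℝ} (hx : 0 ≤ x) : 0 < Phi (-x) := (phi_pos _).trans_le (Phi_lower hx)

lemma Phi_upper {x : ℝ} (hx : 1 ≤ x) : Phi (-x) ≤ phi x := by
  have hder : ∀ t : ℝ, HasDerivAt phi (-t * phi t) t := by
    intro t
    have h1 : HasDerivAt (fun y : ℝ => -y^2/2) (-t) t := by
      have := (((hasDerivAt_id t).pow 2).neg).div_const 2
      refine this.congr_deriv ?_
      simp
      ring
    have := (h1.exp).const_mul (Real.sqrt (2 * Real.pi))⁻¹
    refine this.congr_deriv ?_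
    simp only [phi]; ring
  have hint : Integrable (fun t => -t * phi t) := by
    have h := (integrable_mul_exp_neg_mul_sq (b := 1/2) (by norm_num)).const_mul (-(Real.sqrt (2 * Real.pi))⁻¹)
    refine h.congr (Eventually.of_forall fun x => ?_)
    simp only [phi]
    have : -(1/2) * x^2 = -x^2/2 := by ring
    rw [this]; ring
  have htend : Tendsto phi atBot (nhds 0) := by
    have h0 : Tendsto (fun y : ℝ => -y^2/2) atBot atBot := by
      have h3 : Tendsto (fun y : ℝ => y^2) atBot atTop := by
        simp_rw [sq]; exact tendsto_id.atBot_mul_atBot₀ tendsto_id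
      have := tendsto_neg_atTop_atBot.comp (h3.atTop_div_const (r := 2) (by norm_num))
      refine this.congr fun y => ?_
      simp; ring
    have := (Real.tendsto_exp_atBot.comp h0).const_mul (Real.sqrt (2 * Real.pi))⁻¹
    rw [mul_zero] at this
    exact this
  have h := integral_Iic_of_hasDerivAt_of_tendsto' (a := -x) (fun t _ => hder t) hint.integrableOn htend
  rw [phi_neg, sub_zero] at h
  rw [← h]
  refine setIntegral_mono_on phi_int.integrableOn hint.integrableOn measurableSet_Iic ?_
  intro t ht
  have : t ≤ -x := ht
  nlinarith [phi_pos t]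

lemma key_phi {ρ : ℝ} (hρ : ρ ∈ Set.Ioo (0:ℝ) 1) (c z : ℝ) :
    phi (dd ρ c z) * phi z = phi c * phi ((z + Real.sqrt ρ * c) / Real.sqrt (1 - ρ)) := by
  have h1 : 0 < 1 - ρ := by linarith [hρ.2]
  have e1 : Real.sqrt ρ ^ 2 = ρ := Real.sq_sqrt hρ.1.le
  have e2 : Real.sqrt (1-ρ) ^ 2 = 1 - ρ := Real.sq_sqrt h1.le
  simp only [phi, dd]
  have : -((c + Real.sqrt ρ * z) / Real.sqrt (1 - ρ)) ^ 2 / 2 + -z^2/2 =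
    -c^2/2 + -((z + Real.sqrt ρ * c) / Real.sqrt (1 - ρ)) ^ 2 / 2 := by
    rw [div_pow, div_pow, e2]
    field_simp
    ring_nf
    rw [e1]; ring
  have h2 := congrArg Real.exp this
  rw [Real.exp_add, Real.exp_add] at h2
  linear_combination ((Real.sqrt (2 * Real.pi))⁻¹)^2 * h2

lemma key_d {ρ : ℝ} (hρ : ρ ∈ Set.Ioo (0:ℝ) 1) (c z : ℝ) :
    dd ρ c z = Real.sqrt (1-ρ) * c + Real.sqrt ρ * ((z + Real.sqrt ρ * c) / Real.sqrt (1 - ρ)) := by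
  have h1 : 0 < 1 - ρ := by linarith [hρ.2]
  have h3 : 0 < Real.sqrt (1-ρ) := Real.sqrt_pos.2 h1
  have e1 : Real.sqrt ρ ^ 2 = ρ := Real.sq_sqrt hρ.1.le
  have e2 : Real.sqrt (1-ρ) ^ 2 = 1 - ρ := Real.sq_sqrt h1.le
  unfold dd
  field_simp
  rw [e2]
  linear_combination (-c) * e1

lemma key_G {ρ : ℝ} (hρ : ρ ∈ Set.Ioo (0:ℝ) 1) (c z : ℝ) :
    G ρ c z = (Real.sqrt (1-ρ) / Real.sqrt ρ / (2 * (1 - ρ) ^ ((3 : ℝ) / 2))) *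
      ((z + Real.sqrt ρ * c) / Real.sqrt (1 - ρ)) := by
  have h1 : 0 < 1 - ρ := by linarith [hρ.2]
  have h3 : 0 < Real.sqrt (1-ρ) := Real.sqrt_pos.2 h1
  have h4 : 0 < Real.sqrt ρ := Real.sqrt_pos.2 hρ.1
  have h5 : 0 < (1 - ρ) ^ ((3 : ℝ) / 2) := Real.rpow_pos_of_pos h1 _
  unfold G
  field_simp
  ring

lemma phi_le (x : ℝ) : phi x ≤ Real.exp (-x^2/2) := by
  unfold phi
  have : (Real.sqrt (2 * Real.pi))⁻¹ ≤ 1 := by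
    apply inv_le_one_of_one_le₀
    rw [Real.one_le_sqrt]
    linarith [Real.pi_gt_three]
  exact mul_le_of_le_one_left (Real.exp_pos _).le this

lemma quad_tendsto {β : ℝ} (hβ : 0 < β) (b e : ℝ) :
    Tendsto (fun x : ℝ => β * x^2 - b * x - e) atTop atTop := by
  have h : Tendsto (fun x : ℝ => x * (β * x - b)) atTop atTop :=
    tendsto_id.atTop_mul_atTop₀
      (tendsto_atTop_add_const_right _ (-b) (tendsto_id.const_mul_atTop hβ))
  have := tendsto_atTop_add_const_right _ (-e) h
  refine this.congr fun x => ?_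
  ring

theorem second_term_tendsto_zero
    (ρ : ℝ) (hρ : ρ ∈ Set.Ioo (0:ℝ) 1) (α : ℝ) (hα : α ∈ Set.Ioo (0:ℝ) 1)
    (αseq : ℕ → ℝ) (hαseq : ∀ n, αseq n ∈ Set.Ioo (0:ℝ) 1)
    (hlim : Tendsto (fun n : ℕ => (n : ℝ) * αseq n) atTop (nhds α))
    (c : ℕ → ℝ) (hc : ∀ n, Phi (-(c n)) = αseq n) :
    Tendsto (fun n : ℕ =>
        (n : ℝ) *
          ∫ z : ℝ, (Phi (dd ρ (c n) z)) ^ (n - 1) * phi (dd ρ (c n) z) *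
            |G ρ (c n) z| * phi z)
      atTop (nhds 0) := by
  have h1 : 0 < 1 - ρ := by linarith [hρ.2]
  have hs : 0 < Real.sqrt (1-ρ) := Real.sqrt_pos.2 h1
  have hr : 0 < Real.sqrt ρ := Real.sqrt_pos.2 hρ.1
  have hs1 : Real.sqrt (1-ρ) < 1 := by
    rw [Real.sqrt_lt' one_pos]; linarith [hρ.1]
  -- c → ∞
  have hα0 : Tendsto αseq atTop (nhds 0) := by
    have := hlim.mul (tendsto_inv_atTop_zero.comp (tendsto_natCast_atTop_atTop (R := ℝ)))
    rw [mul_zero] at this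
    refine this.congr' ?_
    filter_upwards [eventually_gt_atTop 0] with n hn
    have : (0:ℝ) < n := by exact_mod_cast hn
    simp only [Function.comp]
    field_simp
  have hctop : Tendsto c atTop atTop := by
    refine tendsto_atTop.2 fun M => ?_
    have hp : 0 < Phi (-(max M 0)) := Phi_pos (le_max_right _ _)
    filter_upwards [hα0.eventually (gt_mem_nhds hp)] with n hn
    rw [← hc n] at hn
    by_contra hcon
    push Not at hcon
    have : Phi (-(max M 0)) ≤ Phi (-(c n)) := Phi_mono (by linarith [le_max_left M 0])
    linarith
  -- choose δ, k
  obtain ⟨δ, hδ, k, hk, hk0, hk1⟩ : ∃ δ > 0, ∃ k, k = Real.sqrt (1-ρ) + Real.sqrt ρ * δ ∧ 0 < k ∧ k < 1 := by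
    refine ⟨(1 - Real.sqrt (1-ρ)) / 2 / Real.sqrt ρ, ?_, _, rfl, ?_, ?_⟩
    · have : 0 < 1 - Real.sqrt (1-ρ) := by linarith
      positivity
    · rw [mul_div_cancel₀ _ hr.ne']; linarith
    · rw [mul_div_cancel₀ _ hr.ne']; linarith
  set A : ℝ := Real.sqrt (1-ρ) / Real.sqrt ρ / (2 * (1 - ρ) ^ ((3 : ℝ) / 2)) with hA
  have hA0 : 0 ≤ A := by
    have h5 : 0 < (1 - ρ) ^ ((3 : ℝ) / 2) := Real.rpow_pos_of_pos h1 _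
    positivity
  let g : ℝ → ℝ := fun w => |w| * Real.exp (-w^2/4)
  have hg : Integrable g := by
    have h := (integrable_mul_exp_neg_mul_sq (b := 1/4) (by norm_num)).abs
    refine h.congr (Eventually.of_forall fun x => ?_)
    simp only [g, abs_mul, Real.abs_exp]
    congr 2; ring
  let W : ℝ → ℝ → ℝ := fun c z => (z + Real.sqrt ρ * c) / Real.sqrt (1 - ρ)
  have hgW : ∀ c, Integrable (fun z => g (W c z)) := fun c =>
    (hg.comp_div hs.ne').comp_add_right (Real.sqrt ρ * c)
  have hgI : ∀ c, ∫ z, g (W c z) = Real.sqrt (1-ρ) * ∫ w, g w := by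
    intro c
    have e1 := integral_add_right_eq_self (μ := volume) (fun z => g (z / Real.sqrt (1-ρ))) (Real.sqrt ρ * c)
    have e2 := Measure.integral_comp_div g (Real.sqrt (1-ρ))
    simp only [W]
    rw [e1, e2, abs_of_pos hs, smul_eq_mul]
  set K : ℝ := Real.sqrt (1-ρ) * ∫ w, g w with hK
  have hK0 : 0 ≤ K := mul_nonneg hs.le (integral_nonneg fun w => by simp only [g]; positivity)
  -- main bound for every n with c n ≥ 0
  have main : ∀ n : ℕ, 0 ≤ c n →
      ∫ z : ℝ, (Phi (dd ρ (c n) z)) ^ (n - 1) * phi (dd ρ (c n) z) * |G ρ (c n) z| * phi z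
      ≤ A * phi (c n) * (Phi (k * c n) ^ (n-1) + Real.exp (-δ^2 * (c n)^2/4)) * K := by
    intro n hcn
    rw [← hgI (c n), ← integral_const_mul]
    refine integral_mono_of_nonneg (Eventually.of_forall fun z => ?_) ((hgW (c n)).const_mul _)
      (Eventually.of_forall fun z => ?_)
    · have := Phi_nonneg (dd ρ (c n) z)
      have := (phi_pos (dd ρ (c n) z)).le
      have := (phi_pos z).le
      simp only [Pi.zero_apply]
      positivity
    · have e1 := key_phi hρ (c n) z
      have e2 := key_d hρ (c n) z
      have e3 := key_G hρ (c n) z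
      rw [← hA] at e3
      have ew : (z + Real.sqrt ρ * c n) / Real.sqrt (1 - ρ) = W (c n) z := rfl
      rw [ew] at e1 e2 e3
      set w := W (c n) z
      have hP0 := Phi_nonneg (dd ρ (c n) z)
      have hP1 : Phi (dd ρ (c n) z) ≤ 1 := by
        rw [Phi_compl]; linarith [Phi_nonneg (-(dd ρ (c n) z))]
      have hsuff : Phi (dd ρ (c n) z) ^ (n-1) * phi w ≤
          (Phi (k * c n) ^ (n-1) + Real.exp (-δ^2 * (c n)^2/4)) * Real.exp (-w^2/4) := by
        rcases le_total w (δ * c n) with hw | hw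
        · have a1 : Phi (dd ρ (c n) z) ≤ Phi (k * c n) := by
            apply Phi_mono
            rw [e2, hk]
            nlinarith [mul_le_mul_of_nonneg_left hw hr.le]
          have a2 : phi w ≤ Real.exp (-w^2/4) :=
            (phi_le w).trans (Real.exp_le_exp.2 (by nlinarith [sq_nonneg w]))
          have a3 : Phi (dd ρ (c n) z) ^ (n-1) ≤ Phi (k * c n) ^ (n-1) := pow_le_pow_left₀ hP0 a1 _
          refine mul_le_mul (a3.trans ?_) a2 (phi_pos w).le ?_
          · linarith [Real.exp_pos (-δ^2 * (c n)^2/4)]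
          · have := Phi_nonneg (k * c n)
            positivity
        · have a3 : Phi (dd ρ (c n) z) ^ (n-1) ≤ 1 := pow_le_one₀ hP0 hP1
          have a2 : phi w ≤ Real.exp (-δ^2 * (c n)^2/4) * Real.exp (-w^2/4) := by
            rw [← Real.exp_add]
            refine (phi_le w).trans (Real.exp_le_exp.2 ?_)
            have : 0 ≤ δ * c n := by positivity
            nlinarith
          have a4 : 0 ≤ Phi (k * c n) ^ (n-1) * Real.exp (-w^2/4) := by
            have := Phi_nonneg (k * c n)
            positivity
          have a5 : Phi (dd ρ (c n) z) ^ (n-1) * phi w ≤ phi w :=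
            mul_le_of_le_one_left (phi_pos w).le a3
          linarith
      have e4 : (Phi (dd ρ (c n) z)) ^ (n - 1) * phi (dd ρ (c n) z) * |G ρ (c n) z| * phi z
          = (A * phi (c n) * |w|) * (Phi (dd ρ (c n) z) ^ (n-1) * phi w) := by
        rw [e3, abs_mul, abs_of_nonneg hA0]
        linear_combination (Phi (dd ρ (c n) z)) ^ (n - 1) * (A * |w|) * e1
      have hpc := (phi_pos (c n)).le
      have := mul_le_mul_of_nonneg_left hsuff (show 0 ≤ A * phi (c n) * |w| by positivity)
      simp only [g]
      rw [e4]
      refine this.trans (le_of_eq ?_)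
      ring
  -- upper bound sequence
  have ha : 0 < (1 - k^2)/2 := by nlinarith
  have hβ : 0 < α / 8 := by linarith [hα.1]
  have hγ : 0 < δ^2/4 := by positivity
  have T : ∀ β : ℝ, 0 < β → Tendsto (fun n => Real.exp (-(β * (c n)^2 - 1 * c n - 1/2))) atTop (nhds 0) := by
    intro β hβ
    exact Real.tendsto_exp_neg_atTop_nhds_zero.comp ((quad_tendsto hβ 1 (1/2)).comp hctop)
  have Tsum := (((T _ hβ).add (T _ hγ)).const_mul (A * K))
  rw [add_zero, mul_zero] at Tsum
  refine squeeze_zero' (Eventually.of_forall fun n => ?_) ?_ Tsum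
  · refine mul_nonneg (Nat.cast_nonneg n) (integral_nonneg fun z => ?_)
    have := Phi_nonneg (dd ρ (c n) z)
    have := (phi_pos (dd ρ (c n) z)).le
    have := (phi_pos z).le
    simp only [Pi.zero_apply]
    positivity
  · filter_upwards [hctop.eventually_ge_atTop 1, eventually_ge_atTop 2,
      hlim.eventually (gt_mem_nhds hα.2),
      hlim.eventually (lt_mem_nhds (show α/2 < α by linarith [hα.1])),
      hctop.eventually ((quad_tendsto ha (k+1) (1/2)).eventually_ge_atTop 0)] with n hc1 hn2 hu hl hq
    have hc0 : 0 ≤ c n := by linarith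
    have hn0 : (0:ℝ) ≤ n := Nat.cast_nonneg n
    -- n φ(c) ≤ exp(c+1/2)
    have b1 : phi (c n) = phi (c n + 1) * Real.exp (c n + 1/2) := by
      unfold phi
      rw [mul_assoc, ← Real.exp_add]
      congr 2; ring
    have b2 : n * phi (c n) ≤ Real.exp (c n + 1/2) := by
      have l := Phi_lower hc0
      rw [hc n] at l
      have l2 : n * phi (c n + 1) ≤ 1 := (mul_le_mul_of_nonneg_left l hn0).trans hu.le
      rw [b1, ← mul_assoc]
      exact mul_le_of_le_one_left (Real.exp_pos _).le l2
    -- Phi(kc)^(n-1)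
    have b3 : α/4 * (c n)^2 ≤ n * Phi (-(k * c n)) := by
      have l := Phi_lower (mul_nonneg hk0.le hc0)
      have u := Phi_upper hc1
      rw [hc n] at u
      have r : phi (c n) * Real.exp (c n) ≤ phi (k * c n + 1) := by
        unfold phi
        rw [mul_assoc, ← Real.exp_add]
        gcongr
        nlinarith
      have r2 : (c n)^2/2 ≤ Real.exp (c n) := by
        have := Real.quadratic_le_exp_of_nonneg hc0
        linarith
      have r3 : αseq n * ((c n)^2/2) ≤ Phi (-(k * c n)) := by
        refine le_trans ?_ (r.trans l)
        exact mul_le_mul u r2 (by positivity) (phi_pos _).le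
      have r4 := mul_le_mul_of_nonneg_left r3 hn0
      have r5 := mul_le_mul_of_nonneg_right hl.le (show 0 ≤ (c n)^2/2 by positivity)
      linarith
    have b4 : Phi (k * c n) ^ (n-1) ≤ Real.exp (-(α/8 * (c n)^2)) := by
      have p1 : Phi (k * c n) ≤ Real.exp (-Phi (-(k * c n))) := by
        rw [Phi_compl]
        exact Real.one_sub_le_exp_neg _
      refine (pow_le_pow_left₀ (Phi_nonneg _) p1 _).trans ?_
      rw [← Real.exp_nat_mul]
      apply Real.exp_le_exp.2
      have hn2' : (2:ℝ) ≤ n := by exact_mod_cast hn2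
      rw [Nat.cast_sub (by omega)]
      have := Phi_nonneg (-(k * c n))
      push_cast
      nlinarith
    have b5 : Phi (k * c n) ^ (n-1) + Real.exp (-δ^2 * (c n)^2/4) ≤
        Real.exp (-(α/8 * (c n)^2)) + Real.exp (-(δ^2/4 * (c n)^2)) := by
      have : -δ^2 * (c n)^2/4 = -(δ^2/4 * (c n)^2) := by ring
      rw [this]; linarith
    have b6 := mul_le_mul b2 b5 (by have := Phi_nonneg (k * c n); positivity) (Real.exp_pos _).le
    have b7 := mul_le_mul_of_nonneg_left b6 (mul_nonneg hA0 hK0)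
    have b8 := mul_le_mul_of_nonneg_left (main n hc0) hn0
    refine b8.trans (le_trans (le_of_eq (by ring)) (b7.trans (le_of_eq ?_)))
    rw [mul_add (Real.exp _), ← Real.exp_add, ← Real.exp_add]
    congr 3 <;> ring
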